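/- arXiv:2210.05971 — 6 statements merged into one kernel-verified Lean document; each statement's English description precedes it below -/
import Mathlib

section
/- Let P = (P₁,…,Pₙ) be a positive regular polynomial n-tuple, n ≥ 2. Then the P-triangle Δⁿ_P is a nonempty, open, connected and bounded subset of ℂⁿ, and it is 𝕋ⁿ-invariant: if z ∈ Δⁿ_P and ζ₁,…,ζₙ ∈ ℂ satisfy |ζ_j| = 1 for all j, then (ζ₁z₁,…,ζₙzₙ) ∈ Δⁿ_P. -/
/-- The map `φ(z) = (z₁/z₂, …, z_{n−1}/zₙ, zₙ)` (0-indexed over `Fin n`). -/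
noncomputable def phi {n : ℕ} (z : Fin n → ℂ) : Fin n → ℂ :=
  fun j => if h : (j : ℕ) + 1 < n then z j / z ⟨(j : ℕ) + 1, h⟩ else z j

/-- The P-triangle `Δⁿ_P`. -/
def HartogsTriangle {n : ℕ} (P : Fin n → MvPolynomial (Fin n) ℝ) : Set (Fin n → ℂ) :=
  {z | (∀ j : Fin n, 1 ≤ (j : ℕ) → z j ≠ 0) ∧
       ∀ j : Fin n, MvPolynomial.eval (fun k => ‖phi z k‖ ^ 2) (P j) < 1}

noncomputable def psi {n : ℕ} (w : Fin n → ℂ) : Fin n → ℂ :=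
  fun j => ∏ k ∈ Finset.Ici j, w k

theorem psi_succ {n : ℕ} (w : Fin n → ℂ) (j : Fin n) (h : (j : ℕ) + 1 < n) :
    psi w j = w j * psi w ⟨(j : ℕ) + 1, h⟩ := by
  unfold psi
  have : Finset.Ici j = insert j (Finset.Ici (⟨(j : ℕ) + 1, h⟩ : Fin n)) := by
    ext k
    simp only [Finset.mem_Ici, Finset.mem_insert, Fin.le_def, Fin.ext_iff]
    omega
  rw [this, Finset.prod_insert]
  simp [Fin.le_def]

theorem psi_last {n : ℕ} (w : Fin n → ℂ) (j : Fin n) (h : ¬ (j : ℕ) + 1 < n) :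
    psi w j = w j := by
  unfold psi
  have : Finset.Ici j = {j} := by
    ext k
    have := k.2
    simp only [Finset.mem_Ici, Finset.mem_singleton, Fin.le_def, Fin.ext_iff]
    omega
  rw [this, Finset.prod_singleton]

theorem psi_ne {n : ℕ} (w : Fin n → ℂ) (hw : ∀ j : Fin n, 1 ≤ (j : ℕ) → w j ≠ 0)
    (j : Fin n) (hj : 1 ≤ (j : ℕ)) : psi w j ≠ 0 := by
  unfold psi
  rw [Finset.prod_ne_zero_iff]
  intro k hk
  apply hw
  simp only [Finset.mem_Ici, Fin.le_def] at hk
  omega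

theorem phi_psi {n : ℕ} (w : Fin n → ℂ) (hw : ∀ j : Fin n, 1 ≤ (j : ℕ) → w j ≠ 0) :
    phi (psi w) = w := by
  funext j
  unfold phi
  split_ifs with h
  · rw [psi_succ w j h, mul_div_assoc, div_self, mul_one]
    exact psi_ne w hw _ (by simp)
  · exact psi_last w j h

theorem psi_phi {n : ℕ} (z : Fin n → ℂ) (hz : ∀ j : Fin n, 1 ≤ (j : ℕ) → z j ≠ 0) :
    psi (phi z) = z := by
  have key : ∀ m : ℕ, ∀ j : Fin n, n - (j : ℕ) = m → psi (phi z) j = z j := by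
    intro m
    induction m with
    | zero => intro j hj; have := j.2; omega
    | succ m ih =>
      intro j hj
      by_cases h : (j : ℕ) + 1 < n
      · rw [psi_succ _ j h, ih ⟨(j : ℕ) + 1, h⟩ (by simp only; omega)]
        unfold phi
        rw [dif_pos h]
        exact div_mul_cancel₀ _ (hz _ (by simp))
      · rw [psi_last _ j h]
        unfold phi
        rw [dif_neg h]
  funext j
  exact key _ j rfl

theorem eval_mono_pos {n : ℕ} (p : MvPolynomial (Fin n) ℝ) (hp : ∀ d, 0 ≤ p.coeff d)
    (x y : Fin n → ℝ) (hx : ∀ k, 0 ≤ x k) (hxy : ∀ k, x k ≤ y k) :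
    MvPolynomial.eval x p ≤ MvPolynomial.eval y p := by
  rw [MvPolynomial.eval_eq', MvPolynomial.eval_eq']
  apply Finset.sum_le_sum
  intro d _
  apply mul_le_mul_of_nonneg_left _ (hp d)
  apply Finset.prod_le_prod
  · intro k _; exact pow_nonneg (hx k) _
  · intro k _; exact pow_le_pow_left₀ (hx k) (hxy k) _

theorem lin_le_eval {n : ℕ} (p : MvPolynomial (Fin n) ℝ) (hp : ∀ d, 0 ≤ p.coeff d)
    (j : Fin n) (hj : 0 < p.coeff (Finsupp.single j 1))
    (x : Fin n → ℝ) (hx : ∀ k, 0 ≤ x k) :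
    p.coeff (Finsupp.single j 1) * x j ≤ MvPolynomial.eval x p := by
  rw [MvPolynomial.eval_eq']
  have h := Finset.single_le_sum (s := p.support)
    (f := fun d => p.coeff d * ∏ i, x i ^ d i)
    (fun d _ => mul_nonneg (hp d) (Finset.prod_nonneg fun k _ => pow_nonneg (hx k) _))
    (a := Finsupp.single j 1) (by rw [MvPolynomial.mem_support_iff]; exact hj.ne')
  refine le_trans (le_of_eq ?_) h
  congr 1
  rw [Finset.prod_eq_single j]
  · simp
  · intro b _ hb; simp [Finsupp.single_apply, hb.symm]
  · simp

def RSet {n : ℕ} (P : Fin n → MvPolynomial (Fin n) ℝ) : Set (Fin n → ℝ) :=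
  {r | (∀ j, 0 ≤ r j) ∧ (∀ j : Fin n, 1 ≤ (j : ℕ) → 0 < r j) ∧
    ∀ j : Fin n, MvPolynomial.eval (fun k => r k ^ 2) (P j) < 1}

noncomputable def FMap {n : ℕ} (q : (Fin n → ℝ) × (Fin n → ℝ)) : Fin n → ℂ :=
  psi (fun k => (q.1 k : ℂ) * Complex.exp ((q.2 k : ℂ) * Complex.I))

theorem triangle_eq {n : ℕ} (P : Fin n → MvPolynomial (Fin n) ℝ) :
    HartogsTriangle P = FMap '' (RSet P ×ˢ Set.univ) := by
  ext z
  constructor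
  · rintro ⟨h1, h2⟩
    refine ⟨(fun k => ‖phi z k‖, fun k => Complex.arg (phi z k)), ⟨⟨?_, ?_, ?_⟩, trivial⟩, ?_⟩
    · intro j; exact norm_nonneg _
    · intro j hj
      simp only [norm_pos_iff]
      unfold phi
      split_ifs with h
      · exact div_ne_zero (h1 _ hj) (h1 _ (by simp))
      · exact h1 _ hj
    · exact h2
    · unfold FMap
      simp only [Complex.norm_mul_exp_arg_mul_I]
      exact psi_phi z h1
  · rintro ⟨⟨r, θ⟩, ⟨⟨h0, h1, h2⟩, -⟩, rfl⟩
    simp only at h0 h1 h2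
    have hw : ∀ j : Fin n, 1 ≤ (j : ℕ) →
        (r j : ℂ) * Complex.exp ((θ j : ℂ) * Complex.I) ≠ 0 := fun j hj =>
      mul_ne_zero (Complex.ofReal_ne_zero.2 (h1 j hj).ne') (Complex.exp_ne_zero _)
    refine ⟨psi_ne _ hw, ?_⟩
    intro j
    unfold FMap
    rw [phi_psi _ hw]
    simpa [Complex.norm_exp_ofReal_mul_I] using h2 j

theorem RSet_lower {n : ℕ} (P : Fin n → MvPolynomial (Fin n) ℝ)
    (hcoeff : ∀ j d, 0 ≤ (P j).coeff d) (m x : Fin n → ℝ) (hx : x ∈ RSet P)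
    (hm0 : ∀ j, 0 ≤ m j) (hm1 : ∀ j : Fin n, 1 ≤ (j : ℕ) → 0 < m j) :
    Set.Icc m x ⊆ RSet P := by
  intro y hy
  refine ⟨fun j => (hm0 j).trans (hy.1 j), fun j hj => (hm1 j hj).trans_le (hy.1 j), fun j => ?_⟩
  refine lt_of_le_of_lt (eval_mono_pos _ (hcoeff j) _ _ (fun k => sq_nonneg _) ?_) (hx.2.2 j)
  intro k
  exact pow_le_pow_left₀ ((hm0 k).trans (hy.1 k)) (hy.2 k) _

theorem RSet_preconn {n : ℕ} (P : Fin n → MvPolynomial (Fin n) ℝ)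
    (hcoeff : ∀ j d, 0 ≤ (P j).coeff d) : IsPreconnected (RSet P) := by
  apply isPreconnected_of_forall_pair
  intro x hx y hy
  have h0 : ∀ j, 0 ≤ (x ⊓ y) j := fun j => le_inf (hx.1 j) (hy.1 j)
  have h1 : ∀ j : Fin n, 1 ≤ (j : ℕ) → 0 < (x ⊓ y) j :=
    fun j hj => lt_inf_iff.2 ⟨hx.2.1 j hj, hy.2.1 j hj⟩
  refine ⟨Set.Icc (x ⊓ y) x ∪ Set.Icc (x ⊓ y) y, ?_, ?_, ?_, ?_⟩
  · exact Set.union_subset (RSet_lower P hcoeff _ _ hx h0 h1) (RSet_lower P hcoeff _ _ hy h0 h1)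
  · exact Or.inl ⟨inf_le_left, le_rfl⟩
  · exact Or.inr ⟨inf_le_right, le_rfl⟩
  · exact IsPreconnected.union (x ⊓ y) ⟨le_rfl, inf_le_left⟩ ⟨le_rfl, inf_le_right⟩
      (convex_Icc _ _).isPreconnected (convex_Icc _ _).isPreconnected

theorem RSet_nonempty {n : ℕ} (P : Fin n → MvPolynomial (Fin n) ℝ)
    (hconst : ∀ j, (P j).coeff 0 = 0) : (RSet P).Nonempty := by
  have h : ∀ᶠ ε : ℝ in nhds 0, ∀ j, MvPolynomial.eval (fun _ => ε ^ 2) (P j) < 1 := by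
    rw [Filter.eventually_all]
    intro j
    have hc : Continuous fun ε : ℝ => MvPolynomial.eval (fun _ : Fin n => ε ^ 2) (P j) :=
      (MvPolynomial.continuous_eval (P j)).comp (by fun_prop)
    apply hc.continuousAt.eventually_lt continuousAt_const
    have : (fun _ : Fin n => (0 : ℝ) ^ 2) = 0 := by funext; simp
    rw [this, MvPolynomial.eval_zero, MvPolynomial.constantCoeff_eq, hconst]
    exact one_pos
  have h2 : ∀ᶠ ε : ℝ in nhdsWithin 0 (Set.Ioi 0),
      ∀ j, MvPolynomial.eval (fun _ => ε ^ 2) (P j) < 1 := h.filter_mono nhdsWithin_le_nhds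
  obtain ⟨ε, h3, h4⟩ := (h2.and self_mem_nhdsWithin).exists
  have h4 : 0 < ε := h4
  exact ⟨fun _ => ε, fun _ => h4.le, fun _ _ => h4, h3⟩

theorem FMap_cont {n : ℕ} : Continuous (FMap (n := n)) := by
  unfold FMap psi
  apply continuous_pi
  intro j
  apply continuous_finsetProd
  intro k _
  fun_prop

theorem triangle_open {n : ℕ} (P : Fin n → MvPolynomial (Fin n) ℝ) :
    IsOpen (HartogsTriangle P) := by
  rw [isOpen_iff_mem_nhds]
  rintro z ⟨h1, h2⟩
  have hphi : ContinuousAt (phi (n := n)) z := by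
    rw [continuousAt_pi]
    intro j
    unfold phi
    by_cases h : (j : ℕ) + 1 < n
    · simp only [h, dif_pos]
      exact (continuous_apply _).continuousAt.div (continuous_apply _).continuousAt
        (h1 _ (by simp))
    · simp only [h, dif_neg, not_false_eq_true]
      exact (continuous_apply _).continuousAt
  have e1 : ∀ᶠ y in nhds z, ∀ j : Fin n, 1 ≤ (j : ℕ) → y j ≠ 0 := by
    rw [Filter.eventually_all]
    intro j
    by_cases hj : 1 ≤ (j : ℕ)
    · filter_upwards [(continuous_apply j).continuousAt.eventually_ne (h1 j hj)] with y hy _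
      exact hy
    · exact Filter.Eventually.of_forall fun y h => absurd h hj
  have e2 : ∀ᶠ y in nhds z, ∀ j : Fin n,
      MvPolynomial.eval (fun k => ‖phi y k‖ ^ 2) (P j) < 1 := by
    rw [Filter.eventually_all]
    intro j
    have hc : Continuous fun w : Fin n → ℂ => MvPolynomial.eval (fun k => ‖w k‖ ^ 2) (P j) :=
      (MvPolynomial.continuous_eval (P j)).comp (by fun_prop)
    exact (ContinuousAt.comp (f := phi) (x := z) hc.continuousAt hphi).eventually_lt
      continuousAt_const (h2 j)
  exact e1.and e2

theorem triangle_bdd {n : ℕ} (P : Fin n → MvPolynomial (Fin n) ℝ)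
    (hcoeff : ∀ j d, 0 ≤ (P j).coeff d)
    (hdiag : ∀ j : Fin n, 0 < (P j).coeff (Finsupp.single j 1)) :
    Bornology.IsBounded (HartogsTriangle P) := by
  set M : Fin n → ℝ := fun k => 1 + 1 / (P k).coeff (Finsupp.single k 1) with hM
  have hM1 : ∀ k, 1 ≤ M k := fun k => by
    have := (one_div_pos.2 (hdiag k)).le
    simp only [hM]; linarith
  rw [isBounded_iff_forall_norm_le]
  refine ⟨∏ k, M k, ?_⟩
  rw [triangle_eq]
  rintro _ ⟨⟨r, θ⟩, ⟨⟨h0, h1, h2⟩, -⟩, rfl⟩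
  simp only at h0 h1 h2
  have hr : ∀ k, r k ≤ M k := by
    intro k
    have h3 := (lin_le_eval (P k) (hcoeff k) k (hdiag k) (fun k => r k ^ 2)
      (fun k => sq_nonneg _)).trans_lt (h2 k)
    have h4 : r k ^ 2 < 1 / (P k).coeff (Finsupp.single k 1) := by
      rw [lt_div_iff₀ (hdiag k)]; linarith
    have h5 : r k ^ 2 ≤ M k := by simp only [hM]; linarith
    nlinarith [hM1 k, h0 k]
  have hpos : 0 ≤ ∏ k, M k := Finset.prod_nonneg fun k _ => zero_le_one.trans (hM1 k)
  rw [pi_norm_le_iff_of_nonneg hpos]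
  intro j
  have e : ‖FMap (r, θ) j‖ = ∏ k ∈ Finset.Ici j, r k := by
    unfold FMap psi
    rw [norm_prod]
    apply Finset.prod_congr rfl
    intro k _
    simp [Complex.norm_exp_ofReal_mul_I, abs_of_nonneg (h0 k)]
  rw [e]
  calc _ ≤ ∏ k ∈ Finset.Ici j, M k := Finset.prod_le_prod (fun k _ => h0 k) (fun k _ => hr k)
    _ ≤ ∏ k, M k := by
      rw [← Finset.prod_sdiff (Finset.subset_univ (Finset.Ici j))]
      apply le_mul_of_one_le_left
      · exact Finset.prod_nonneg fun k _ => zero_le_one.trans (hM1 k)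
      · calc (1 : ℝ) = ∏ k ∈ Finset.univ \ Finset.Ici j, (1 : ℝ) := by simp
          _ ≤ _ := Finset.prod_le_prod (fun k _ => zero_le_one) (fun k _ => hM1 k)

theorem triangle_inv {n : ℕ} (P : Fin n → MvPolynomial (Fin n) ℝ) :
    ∀ z ∈ HartogsTriangle P, ∀ ζ : Fin n → ℂ, (∀ j, ‖ζ j‖ = 1) →
      (fun j => ζ j * z j) ∈ HartogsTriangle P := by
  rintro z ⟨h1, h2⟩ ζ hζ
  refine ⟨fun j hj => mul_ne_zero ?_ (h1 j hj), fun j => ?_⟩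
  · rw [← norm_pos_iff, hζ]; exact one_pos
  · have : ∀ k, ‖phi (fun j => ζ j * z j) k‖ = ‖phi z k‖ := by
      intro k
      unfold phi
      split_ifs with h <;> simp [hζ]
    simp only [this]
    exact h2 j

/-- for a positive regular polynomial tuple `P`, the P-triangle is a nonempty,
open, connected, bounded and `𝕋ⁿ`-invariant subset of `ℂⁿ`. -/
theorem stmt1 {n : ℕ} (hn : 2 ≤ n) (P : Fin n → MvPolynomial (Fin n) ℝ)
    (hcoeff : ∀ j d, 0 ≤ (P j).coeff d)
    (hconst : ∀ j, (P j).coeff 0 = 0)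
    (hlin : ∀ j k : Fin n, k ≠ j → (P j).coeff (Finsupp.single k 1) = 0)
    (hdiag : ∀ j : Fin n, 0 < (P j).coeff (Finsupp.single j 1)) :
    (HartogsTriangle P).Nonempty ∧
    IsOpen (HartogsTriangle P) ∧
    IsConnected (HartogsTriangle P) ∧
    Bornology.IsBounded (HartogsTriangle P) ∧
    (∀ z ∈ HartogsTriangle P, ∀ ζ : Fin n → ℂ, (∀ j, ‖ζ j‖ = 1) →
      (fun j => ζ j * z j) ∈ HartogsTriangle P) := by
  have hne : (HartogsTriangle P).Nonempty := by
    rw [triangle_eq]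
    exact ((RSet_nonempty P hconst).prod Set.univ_nonempty).image _
  refine ⟨hne, triangle_open P, ⟨hne, ?_⟩, triangle_bdd P hcoeff hdiag, triangle_inv P⟩
  rw [triangle_eq]
  exact ((RSet_preconn P hcoeff).prod isPreconnected_univ).image _ FMap_cont.continuousOn
end

section
/- Let P = (P₁,…,Pₙ) be a positive regular polynomial n-tuple, n ≥ 2, and for each j let P̃_j(t) = P_j(t·ε_j) and D_j = {w ∈ ℂ : P̃_j(|w|²) < 1}. Then P is admissible if and only if {φ(z) : z ∈ Δⁿ_P} = D₁ × (D₂∖{0}) × ⋯ × (Dₙ∖{0}). -/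
open MvPolynomial in
theorem eval_scale_le {n : ℕ} (p : MvPolynomial (Fin n) ℝ) (hc : ∀ d, 0 ≤ p.coeff d)
    (h0 : p.coeff 0 = 0) (x : Fin n → ℝ) (hx : ∀ k, 0 ≤ x k) (s : ℝ) (hs0 : 0 ≤ s) (hs1 : s ≤ 1) :
    eval (fun k => s * x k) p ≤ s * eval x p := by
  rw [eval_eq', eval_eq', Finset.mul_sum]
  refine Finset.sum_le_sum fun d hd => ?_
  have hd0 : d ≠ 0 := by
    rintro rfl
    exact (mem_support_iff.1 hd) h0
  have hdeg : ∑ k, d k ≠ 0 := by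
    intro h
    apply hd0
    ext k
    exact (Finset.sum_eq_zero_iff.1 h) k (Finset.mem_univ k)
  have e : ∏ k, (s * x k) ^ d k = s ^ (∑ k, d k) * ∏ k, x k ^ d k := by
    simp only [mul_pow, Finset.prod_mul_distrib, Finset.prod_pow_eq_pow_sum]
  rw [e]
  have h1 : s ^ (∑ k, d k) ≤ s := pow_le_of_le_one hs0 hs1 hdeg
  have h2 : 0 ≤ coeff d p * ∏ k, x k ^ d k :=
    mul_nonneg (hc d) (Finset.prod_nonneg fun k _ => pow_nonneg (hx k) _)
  calc coeff d p * (s ^ (∑ k, d k) * ∏ k, x k ^ d k)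
      = s ^ (∑ k, d k) * (coeff d p * ∏ k, x k ^ d k) := by ring
    _ ≤ _ := mul_le_mul_of_nonneg_right h1 h2

open MvPolynomial in
theorem eval_cont {n : ℕ} (p : MvPolynomial (Fin n) ℝ) (f : ℝ → Fin n → ℝ)
    (hf : Continuous f) : Continuous fun t => eval (f t) p :=
  (MvPolynomial.continuous_eval p).comp hf

open MvPolynomial in
theorem exists_root {n : ℕ} (p : MvPolynomial (Fin n) ℝ) (hc : ∀ d, 0 ≤ p.coeff d)
    (h0 : p.coeff 0 = 0) (i : Fin n) (hi : 0 < p.coeff (Finsupp.single i 1)) :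
    ∃ t : ℝ, 0 < t ∧ eval (fun k => if k = i then t else 0) p = 1 := by
  set Q : ℝ → ℝ := fun t => eval (fun k => if k = i then t else 0) p with hQ
  have hcont : Continuous Q := by
    apply eval_cont
    refine continuous_pi fun k => ?_
    split_ifs <;> fun_prop
  have hQ0 : Q 0 = 0 := by
    have : (fun k : Fin n => if k = i then (0:ℝ) else 0) = 0 := by ext; simp
    simp only [hQ, this]
    rw [← h0, MvPolynomial.eval_zero, MvPolynomial.constantCoeff_eq]
  set T := (p.coeff (Finsupp.single i 1))⁻¹
  have hT : 0 < T := inv_pos.2 hi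
  have hQT : 1 ≤ Q T := by
    simp only [hQ]
    rw [eval_eq']
    have := Finset.single_le_sum (s := p.support)
      (f := fun d => coeff d p * ∏ k, (if k = i then T else 0) ^ d k)
      (fun d _ => mul_nonneg (hc d) (Finset.prod_nonneg fun k _ => pow_nonneg
        (by split_ifs <;> positivity) _)) (mem_support_iff.2 hi.ne')
    refine le_trans (le_of_eq ?_) this
    have e : ∏ k, (if k = i then T else 0) ^ (Finsupp.single i 1 : Fin n →₀ ℕ) k = T := by
      rw [Finset.prod_eq_single i]
      · simp
      · intro b _ hb
        simp [Finsupp.single_apply, hb.symm]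
      · simp
    simp only [e]
    exact (mul_inv_cancel₀ hi.ne').symm
  obtain ⟨t, ht, ht1⟩ := intermediate_value_Icc hT.le hcont.continuousOn
    (show (1:ℝ) ∈ Set.Icc (Q 0) (Q T) from ⟨by rw [hQ0]; norm_num, hQT⟩)
  refine ⟨t, lt_of_le_of_ne ht.1 ?_, ht1⟩
  rintro rfl
  rw [hQ0] at ht1
  norm_num at ht1

open MvPolynomial in
theorem eval_restrict_lt {n : ℕ} (p : MvPolynomial (Fin n) ℝ) (hc : ∀ d, 0 ≤ p.coeff d)
    (j : Fin n) (x : Fin n → ℝ) (hx : ∀ k, 0 < x k) (d : Fin n →₀ ℕ) (hd : d ∈ p.support)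
    (k : Fin n) (hk : k ≠ j) (hdk : d k ≠ 0) :
    eval (fun k => if k = j then x j else 0) p < eval x p := by
  rw [eval_eq', eval_eq']
  refine Finset.sum_lt_sum (fun e _ => ?_) ⟨d, hd, ?_⟩
  · refine mul_le_mul_of_nonneg_left (Finset.prod_le_prod (fun l _ => pow_nonneg ?_ _)
      (fun l _ => pow_le_pow_left₀ ?_ ?_ _)) (hc e)
    · split_ifs
      exacts [(hx j).le, le_rfl]
    · split_ifs
      exacts [(hx j).le, le_rfl]
    · split_ifs with h
      exacts [by rw [h], (hx l).le]
  · rw [Finset.prod_eq_zero (Finset.mem_univ k) (by simp [hk, hdk]), mul_zero]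
    exact mul_pos (lt_of_le_of_ne (hc d) (Ne.symm (mem_support_iff.1 hd)))
      (Finset.prod_pos fun l _ => pow_pos (hx l) _)

theorem phi_surj {n : ℕ} (w : Fin n → ℂ) (hw : ∀ j : Fin n, 1 ≤ (j : ℕ) → w j ≠ 0) :
    ∃ z : Fin n → ℂ, (∀ j : Fin n, 1 ≤ (j : ℕ) → z j ≠ 0) ∧ phi z = w := by
  have hz : ∀ j : Fin n, 1 ≤ (j : ℕ) → ∏ k ∈ Finset.Ici j, w k ≠ 0 := by
    intro j hj
    refine Finset.prod_ne_zero_iff.2 fun k hk => hw k ?_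
    have := Finset.mem_Ici.1 hk
    exact hj.trans this
  refine ⟨fun j => ∏ k ∈ Finset.Ici j, w k, hz, ?_⟩
  funext j
  unfold phi
  split_ifs with h
  · have e : Finset.Ici j = insert j (Finset.Ici (⟨j + 1, h⟩ : Fin n)) := by
      ext k
      simp only [Finset.mem_Ici, Finset.mem_insert, Fin.le_def, Fin.ext_iff]
      omega
    have hn : j ∉ Finset.Ici (⟨j + 1, h⟩ : Fin n) := by
      simp [Fin.le_def]
    simp only [e, Finset.prod_insert hn]
    exact mul_div_cancel_right₀ _ (hz _ (by simp))
  · have e : Finset.Ici j = {j} := by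
      ext k
      simp only [Finset.mem_Ici, Finset.mem_singleton, Fin.le_def, Fin.ext_iff]
      omega
    simp [e]

theorem image_eq {n : ℕ} (P : Fin n → MvPolynomial (Fin n) ℝ) :
    phi '' HartogsTriangle P = {w : Fin n → ℂ | ∀ j : Fin n,
      MvPolynomial.eval (fun k => ‖w k‖ ^ 2) (P j) < 1 ∧ (1 ≤ (j : ℕ) → w j ≠ 0)} := by
  ext w
  constructor
  · rintro ⟨z, ⟨hz, hP⟩, rfl⟩ j
    refine ⟨hP j, fun hj => ?_⟩
    unfold phi
    split_ifs with h
    · exact div_ne_zero (hz j hj) (hz _ (by simp))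
    · exact hz j hj
  · intro h
    obtain ⟨z, hz, rfl⟩ := phi_surj w fun j => (h j).2
    exact ⟨z, ⟨hz, fun j => (h j).1⟩, rfl⟩

/-- a positive regular tuple `P` is admissible (each `P_j` only involves the
variable `z_j`) iff `φ(Δⁿ_P) = D₁ × (D₂∖{0}) × ⋯ × (Dₙ∖{0})`, where
`D_j = {w ∈ ℂ : P_j(|w|²·ε_j) < 1}`. -/
theorem stmt3 {n : ℕ} (hn : 2 ≤ n) (P : Fin n → MvPolynomial (Fin n) ℝ)
    (hcoeff : ∀ j d, 0 ≤ (P j).coeff d)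
    (hconst : ∀ j, (P j).coeff 0 = 0)
    (hlin : ∀ j k : Fin n, k ≠ j → (P j).coeff (Finsupp.single k 1) = 0)
    (hdiag : ∀ j : Fin n, 0 < (P j).coeff (Finsupp.single j 1)) :
    (∀ j : Fin n, ∀ d ∈ (P j).support, ∀ k : Fin n, k ≠ j → d k = 0) ↔
      phi '' HartogsTriangle P =
        {w : Fin n → ℂ | ∀ j : Fin n,
          MvPolynomial.eval (fun k => if k = j then ‖w j‖ ^ 2 else 0) (P j) < 1 ∧
          (1 ≤ (j : ℕ) → w j ≠ 0)} := by
  rw [image_eq]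
  constructor
  · intro h
    have key : ∀ (w : Fin n → ℂ) (j : Fin n),
        MvPolynomial.eval (fun k => ‖w k‖ ^ 2) (P j) =
        MvPolynomial.eval (fun k => if k = j then ‖w j‖ ^ 2 else 0) (P j) := by
      intro w j
      rw [MvPolynomial.eval_eq', MvPolynomial.eval_eq']
      refine Finset.sum_congr rfl fun d hd => ?_
      congr 1
      refine Finset.prod_congr rfl fun k _ => ?_
      by_cases hk : k = j
      · simp [hk]
      · simp [h j d hd k hk]
    ext w
    simp only [Set.mem_setOf_eq, key]
  · intro h j d hd k hk
    by_contra hdk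
    choose t ht0 ht1 using fun i => exists_root (P i) (hcoeff i) (hconst i) i (hdiag i)
    have hlt := eval_restrict_lt (P j) (hcoeff j) j t ht0 d hd k hk hdk
    rw [ht1] at hlt
    have hs : ∀ s : ℝ, 0 < s → s < 1 → MvPolynomial.eval (fun k => s * t k) (P j) < 1 := by
      intro s hs0 hs1
      have hn2 : ∀ i, ‖((Real.sqrt (s * t i) : ℝ) : ℂ)‖ ^ 2 = s * t i := by
        intro i
        rw [Complex.norm_real, Real.norm_eq_abs, sq_abs, Real.sq_sqrt (mul_pos hs0 (ht0 i)).le]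
      have hmem : (fun i => ((Real.sqrt (s * t i) : ℝ) : ℂ)) ∈ {w : Fin n → ℂ | ∀ j : Fin n,
          MvPolynomial.eval (fun k => if k = j then ‖w j‖ ^ 2 else 0) (P j) < 1 ∧
          (1 ≤ (j : ℕ) → w j ≠ 0)} := by
        intro i
        refine ⟨?_, fun _ => ?_⟩
        · simp only [hn2]
          have := eval_scale_le (P i) (hcoeff i) (hconst i) (fun k => if k = i then t i else 0)
            (fun k => by
              split_ifs
              exacts [(ht0 i).le, le_rfl]) s hs0.le hs1.le
          rw [ht1 i] at this
          simp only [mul_ite, mul_zero, mul_one] at this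
          exact this.trans_lt hs1
        · exact Complex.ofReal_ne_zero.2 (Real.sqrt_pos.2 (mul_pos hs0 (ht0 i))).ne'
      rw [← h] at hmem
      have := (hmem j).1
      simpa only [hn2] using this
    have hcont : Continuous fun s : ℝ => MvPolynomial.eval (fun k => s * t k) (P j) :=
      eval_cont (P j) (fun s k => s * t k) (by fun_prop)
    have hlim : MvPolynomial.eval (fun k => 1 * t k) (P j) ≤ 1 := by
      refine le_of_tendsto ((hcont.tendsto 1).mono_left
        (nhdsWithin_le_nhds (s := Set.Iio (1:ℝ)))) ?_
      filter_upwards [Ioo_mem_nhdsLT (show (0:ℝ) < 1 by norm_num)] with s hs'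
      exact (hs s hs'.1 hs'.2).le
    simp only [one_mul] at hlim
    exact absurd hlt (not_lt.2 hlim)
end

section
/- Let n ≥ 1 and let Q ∈ ℝ[z₁,…,zₙ] have nonnegative coefficients and zero constant term, and let B_Q = {z ∈ ℂⁿ : Q(|z₁|²,…,|zₙ|²) < 1}. Then B_Q is monomially convex: for every nonempty compact set K ⊆ B_Q, the monomial hull K̂ = {w ∈ ℂⁿ : |w^α| ≤ sup_{z∈K} |z^α| for every multi-index α ∈ ℕⁿ} is a compact subset of B_Q. -/
open MvPolynomial in
lemma aux_coeff {n : ℕ} (Q : MvPolynomial (Fin n) ℝ) (h : ∀ d, 0 ≤ Q.coeff d) (N : ℕ) :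
    ∀ d, 0 ≤ (Q ^ N).coeff d := by
  classical
  induction N with
  | zero =>
    intro d
    rw [pow_zero, coeff_one]
    split_ifs <;> norm_num
  | succ k ih =>
    intro d
    rw [pow_succ, coeff_mul]
    exact Finset.sum_nonneg fun x _ => mul_nonneg (ih _) (h _)

open MvPolynomial in
lemma aux_nonneg {n : ℕ} (P : MvPolynomial (Fin n) ℝ) (h : ∀ d, 0 ≤ P.coeff d)
    (z : Fin n → ℂ) : 0 ≤ eval (fun j => ‖z j‖ ^ 2) P := by
  rw [eval_eq']
  exact Finset.sum_nonneg fun d _ => mul_nonneg (h d) (Finset.prod_nonneg fun i _ => by positivity)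

lemma aux_prod {n : ℕ} (z : Fin n → ℂ) (d : Fin n → ℕ) :
    ∏ i, (‖z i‖ ^ 2) ^ d i = ‖∏ i, z i ^ d i‖ ^ 2 := by
  rw [norm_prod, ← Finset.prod_pow]
  refine Finset.prod_congr rfl fun i _ => ?_
  rw [norm_pow, ← pow_mul, ← pow_mul, mul_comm]

open MvPolynomial in
lemma aux_bound {n : ℕ} (P : MvPolynomial (Fin n) ℝ) (h : ∀ d, 0 ≤ P.coeff d)
    (K : Set (Fin n → ℂ)) (w : Fin n → ℂ) (M : ℝ)
    (hM : ∀ z ∈ K, eval (fun j => ‖z j‖ ^ 2) P ≤ M)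
    (hw : ∀ α : Fin n → ℕ, ∃ z ∈ K, ‖∏ j, w j ^ α j‖ ≤ ‖∏ j, z j ^ α j‖) :
    eval (fun j => ‖w j‖ ^ 2) P ≤ P.support.card * M := by
  rw [eval_eq', ← nsmul_eq_mul]
  refine Finset.sum_le_card_nsmul _ _ _ fun d hd => ?_
  obtain ⟨z, hz, hwz⟩ := hw d
  refine le_trans ?_ (hM z hz)
  rw [eval_eq']
  refine le_trans ?_ (Finset.single_le_sum (f := fun d => P.coeff d * ∏ i, (‖z i‖ ^ 2) ^ d i)
    (fun d _ => mul_nonneg (h d) (Finset.prod_nonneg fun i _ => by positivity)) hd)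
  simp only [aux_prod]
  have := h d
  gcongr

open MvPolynomial in
lemma aux_card {n : ℕ} (Q : MvPolynomial (Fin n) ℝ) (N : ℕ) :
    (Q ^ N).support.card ≤ (N * Q.totalDegree + 1) ^ n := by
  classical
  have hs : (Q ^ N).support ⊆
      Finset.Iic (Finsupp.equivFunOnFinite.symm fun _ : Fin n => N * Q.totalDegree) := by
    intro d hd
    rw [Finset.mem_Iic]
    intro i
    have h1 := le_totalDegree hd
    have h2 := totalDegree_pow Q N
    have h3 : d i ≤ d.sum fun _ e => e := by
      rw [Finsupp.sum_fintype _ _ (by simp)]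
      exact Finset.single_le_sum (f := fun i => d i) (fun _ _ => Nat.zero_le _) (Finset.mem_univ i)
    simp only [Finsupp.equivFunOnFinite_symm_apply_apply]
    omega
  refine (Finset.card_le_card hs).trans ?_
  rw [Finsupp.card_Iic]
  simp only [Nat.card_Iic, Finsupp.equivFunOnFinite_symm_apply_apply, Finset.prod_const]
  refine Nat.pow_le_pow_right (by omega) ?_
  exact (Finset.card_le_univ _).trans (by simp)

/-- the Q-ball `B_Q` is monomially convex: for every nonempty compact
`K ⊆ B_Q`, the monomial hull
`K̂ = {w : |w^α| ≤ sup_{z∈K} |z^α| for all α}` is a compact subset of `B_Q`. -/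
theorem stmt4 {n : ℕ} (hn : 1 ≤ n) (Q : MvPolynomial (Fin n) ℝ)
    (hcoeff : ∀ d, 0 ≤ Q.coeff d) (hconst : Q.coeff 0 = 0)
    (K : Set (Fin n → ℂ)) (hK : IsCompact K) (hKne : K.Nonempty)
    (hKB : K ⊆ {z : Fin n → ℂ | MvPolynomial.eval (fun j => ‖z j‖ ^ 2) Q < 1}) :
    IsCompact {w : Fin n → ℂ | ∀ α : Fin n → ℕ,
        ‖∏ j, w j ^ α j‖ ≤ sSup ((fun z : Fin n → ℂ => ‖∏ j, z j ^ α j‖) '' K)} ∧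
    {w : Fin n → ℂ | ∀ α : Fin n → ℕ,
        ‖∏ j, w j ^ α j‖ ≤ sSup ((fun z : Fin n → ℂ => ‖∏ j, z j ^ α j‖) '' K)} ⊆
      {z : Fin n → ℂ | MvPolynomial.eval (fun j => ‖z j‖ ^ 2) Q < 1} := by
  have hatt : ∀ α : Fin n → ℕ, ∃ z ∈ K,
      sSup ((fun z : Fin n → ℂ => ‖∏ j, z j ^ α j‖) '' K) = ‖∏ j, z j ^ α j‖ := fun α =>
    hK.exists_sSup_image_eq hKne (Continuous.continuousOn (by fun_prop))
  refine ⟨?_, ?_⟩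
  · apply Metric.isCompact_of_isClosed_isBounded
    · simp only [Set.setOf_forall]
      exact isClosed_iInter fun α => isClosed_le (by fun_prop) continuous_const
    · obtain ⟨C, hC⟩ := hK.isBounded.exists_norm_le
      rw [isBounded_iff_forall_norm_le]
      refine ⟨C, fun w hw => ?_⟩
      have hC0 : 0 ≤ C := by
        obtain ⟨z, hz⟩ := hKne
        exact (norm_nonneg z).trans (hC z hz)
      rw [pi_norm_le_iff_of_nonneg hC0]
      intro i
      obtain ⟨z, hz, he⟩ := hatt (Pi.single i 1)
      have h1 := hw (Pi.single i 1)
      rw [he] at h1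
      have key : ∀ v : Fin n → ℂ, ∏ j, v j ^ (Pi.single i 1 : Fin n → ℕ) j = v i := by
        intro v
        rw [Finset.prod_eq_single i]
        · simp
        · intro b _ hb
          simp [hb]
        · simp
      rw [key, key] at h1
      exact h1.trans ((norm_le_pi_norm z i).trans (hC z hz))
  · intro w hw
    have hw' : ∀ α : Fin n → ℕ, ∃ z ∈ K, ‖∏ j, w j ^ α j‖ ≤ ‖∏ j, z j ^ α j‖ := by
      intro α
      obtain ⟨z, hz, he⟩ := hatt α
      exact ⟨z, hz, he ▸ hw α⟩
    have hcont : Continuous fun z : Fin n → ℂ => MvPolynomial.eval (fun j => ‖z j‖ ^ 2) Q :=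
      (MvPolynomial.continuous_eval Q).comp (by fun_prop)
    obtain ⟨z0, hz0, hmax⟩ := hK.exists_isMaxOn hKne hcont.continuousOn
    set M := MvPolynomial.eval (fun j => ‖z0 j‖ ^ 2) Q with hMdef
    have hM1 : M < 1 := hKB hz0
    have hM0 : 0 ≤ M := aux_nonneg Q hcoeff z0
    by_contra hcon
    have hq : 1 ≤ MvPolynomial.eval (fun j => ‖w j‖ ^ 2) Q := not_lt.mp hcon
    set D := Q.totalDegree
    have hb : ∀ N : ℕ, 1 ≤ N → (1 : ℝ) ≤ ((D : ℝ) + 1) ^ n * ((N : ℝ) ^ n * M ^ N) := by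
      intro N hN
      have h1 := aux_bound (Q ^ N) (aux_coeff Q hcoeff N) K w (M ^ N) (by
        intro z hz
        rw [map_pow]
        exact pow_le_pow_left₀ (aux_nonneg Q hcoeff z) (hmax hz) N) hw'
      rw [map_pow] at h1
      have h2 : ((Q ^ N).support.card : ℝ) ≤ ((N : ℝ) * D + 1) ^ n := by
        exact_mod_cast aux_card Q N
      have hN' : (1 : ℝ) ≤ N := by exact_mod_cast hN
      calc (1 : ℝ) ≤ _ := one_le_pow₀ hq
        _ ≤ _ := h1
        _ ≤ ((N : ℝ) * D + 1) ^ n * M ^ N := by gcongr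
        _ ≤ (((D : ℝ) + 1) * N) ^ n * M ^ N := by
          gcongr
          nlinarith
        _ = _ := by rw [mul_pow]; ring
    have hlim := (tendsto_pow_const_mul_const_pow_of_abs_lt_one n
      (show |M| < 1 by rwa [abs_of_nonneg hM0])).const_mul (((D : ℝ) + 1) ^ n)
    rw [mul_zero] at hlim
    have := ge_of_tendsto hlim (Filter.eventually_atTop.mpr ⟨1, hb⟩)
    linarith
end

section
/- Let P = (P₁,…,Pₙ) be a positive regular polynomial n-tuple, n ≥ 2, and m = (m₁,…,mₙ) with each m_j ≥ 1. For z, w ∈ Δⁿ_P let u(z,w) ∈ ℂⁿ be the vector with k-th coordinate φ(z)_k · conj(φ(w)_k). Then: (a) for every z, w ∈ Δⁿ_P and every j, P_j^ℂ(u(z,w)) ≠ 1 (where P_j^ℂ is P_j with coefficients viewed in ℂ), so that the kernel K(z,w) = (∏_{j=2}^n z_j·conj(w_j))^{−1} · ∏_{j=1}^n (1 − P_j^ℂ(u(z,w)))^{−m_j} is well defined; and (b) K is positive semi-definite: for every N ≥ 1, all points z^{(1)},…,z^{(N)} ∈ Δⁿ_P and all c₁,…,c_N ∈ ℂ, the complex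 number Σ_{i,l=1}^N c_i · conj(c_l) · K(z^{(i)}, z^{(l)}) is real and nonnegative. -/
open scoped ComplexOrder

/-- The Hadamard-type vector `u(z,w)_k = φ(z)_k · conj(φ(w)_k)`. -/
noncomputable def uVec {n : ℕ} (z w : Fin n → ℂ) : Fin n → ℂ :=
  fun k => phi z k * (starRingEnd ℂ) (phi w k)

/-- The kernel `K(z,w)`. -/
noncomputable def kerPm {n : ℕ} (P : Fin n → MvPolynomial (Fin n) ℝ) (m : Fin n → ℕ)
    (z w : Fin n → ℂ) : ℂ :=
  (∏ j ∈ Finset.univ.filter (fun j : Fin n => 1 ≤ (j : ℕ)),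
      z j * (starRingEnd ℂ) (w j))⁻¹ *
    ∏ j, ((1 - MvPolynomial.aeval (uVec z w) (P j)) ^ m j)⁻¹

def PK {N : ℕ} (A : Fin N → Fin N → ℂ) : Prop := (Matrix.of A).PosSemidef

lemma PK.form {N : ℕ} {A : Fin N → Fin N → ℂ} (h : PK A) (c : Fin N → ℂ) :
    0 ≤ ∑ i : Fin N, ∑ l : Fin N, c i * (starRingEnd ℂ) (c l) * A i l := by
  have := Matrix.PosSemidef.dotProduct_mulVec_nonneg h (star c)
  convert this using 1
  simp only [dotProduct, Matrix.mulVec, Matrix.of_apply, Finset.mul_sum, star_star, Pi.star_apply]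
  refine Finset.sum_congr rfl fun i _ => Finset.sum_congr rfl fun l _ => ?_
  simp only [starRingEnd_apply]
  ring

lemma PK.rank1 {N : ℕ} (f : Fin N → ℂ) : PK fun i l => f i * (starRingEnd ℂ) (f l) := by
  have := Matrix.posSemidef_vecMulVec_self_star f
  exact this

lemma PK.mul {N : ℕ} {A B : Fin N → Fin N → ℂ} (hA : PK A) (hB : PK B) :
    PK fun i l => A i l * B i l := Matrix.PosSemidef.hadamard hA hB

lemma PK.one {N : ℕ} : PK (fun _ _ : Fin N => (1 : ℂ)) := by
  simpa using PK.rank1 (fun _ : Fin N => (1 : ℂ))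

lemma PK.pow {N : ℕ} {A : Fin N → Fin N → ℂ} (hA : PK A) (k : ℕ) :
    PK fun i l => A i l ^ k := by
  induction k with
  | zero => simpa using PK.one
  | succ k ih => simpa only [pow_succ] using ih.mul hA

lemma PK.prod {N : ℕ} {ι : Type*} (s : Finset ι) {A : ι → Fin N → Fin N → ℂ}
    (hA : ∀ j, PK (A j)) : PK fun i l => ∏ j ∈ s, A j i l := by
  classical
  induction s using Finset.induction_on with
  | empty => simpa using PK.one
  | insert a s ha ih => simpa only [Finset.prod_insert ha] using (hA a).mul ih

lemma PK.sum {N : ℕ} {ι : Type*} (s : Finset ι) {A : ι → Fin N → Fin N → ℂ}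
    (hA : ∀ j, PK (A j)) : PK fun i l => ∑ j ∈ s, A j i l := by
  classical
  induction s using Finset.induction_on with
  | empty => simpa using PK.rank1 (fun _ : Fin N => (0 : ℂ))
  | insert a s ha ih =>
    simp only [Finset.sum_insert ha]
    exact Matrix.PosSemidef.add (hA a) ih

lemma PK.const {N : ℕ} {a : ℝ} (ha : 0 ≤ a) : PK (fun _ _ : Fin N => (a : ℂ)) := by
  have := PK.rank1 (fun _ : Fin N => ((√a : ℝ) : ℂ))
  simpa [← Complex.ofReal_mul, Real.mul_self_sqrt ha] using this

lemma PK.lim {N : ℕ} {A : ℕ → Fin N → Fin N → ℂ} {B : Fin N → Fin N → ℂ}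
    (hA : ∀ k, PK (A k))
    (h : ∀ i l, Filter.Tendsto (fun k => A k i l) Filter.atTop (nhds (B i l))) : PK B := by
  refine Matrix.PosSemidef.of_dotProduct_mulVec_nonneg ?_ fun x => ?_
  · ext i l
    simp only [Matrix.conjTranspose_apply, Matrix.of_apply]
    refine tendsto_nhds_unique ((continuous_star.tendsto _).comp (h l i)) ?_
    refine (h i l).congr fun k => ?_
    exact ((hA k).1.apply i l).symm
  · have key : Filter.Tendsto (fun k => star x ⬝ᵥ (Matrix.of (A k)).mulVec x) Filter.atTop
        (nhds (star x ⬝ᵥ (Matrix.of B).mulVec x)) := by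
      simp only [dotProduct, Matrix.mulVec, Matrix.of_apply]
      refine tendsto_finsetSum _ fun i _ => Filter.Tendsto.const_mul _ ?_
      exact tendsto_finsetSum _ fun l _ => (h i l).mul_const _
    exact ge_of_tendsto' key fun k => (hA k).dotProduct_mulVec_nonneg x

lemma PK.inv_one_sub {N : ℕ} {A : Fin N → Fin N → ℂ} (hA : PK A) (h : ∀ i l, ‖A i l‖ < 1) :
    PK fun i l => (1 - A i l)⁻¹ :=
  PK.lim (A := fun k i l => ∑ j ∈ Finset.range k, A i l ^ j)
    (fun k => PK.sum _ fun j => hA.pow j)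
    fun i l => (hasSum_geometric_of_norm_lt_one (h i l)).tendsto_sum_nat

lemma PK.aeval {N n : ℕ} (zs : Fin N → Fin n → ℂ) (p : MvPolynomial (Fin n) ℝ)
    (hp : ∀ d, 0 ≤ p.coeff d) :
    PK fun i l => MvPolynomial.aeval (uVec (zs i) (zs l)) p := by
  simp only [MvPolynomial.aeval_def, MvPolynomial.eval₂_eq']
  refine PK.sum _ fun d => PK.mul (PK.const (hp d)) (PK.prod _ fun k => PK.pow ?_ _)
  exact PK.rank1 fun i => phi (zs i) k

lemma norm_aeval_lt {n : ℕ} (z w : Fin n → ℂ) (p : MvPolynomial (Fin n) ℝ)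
    (hp : ∀ d, 0 ≤ p.coeff d)
    (hz : MvPolynomial.eval (fun k => ‖phi z k‖ ^ 2) p < 1)
    (hw : MvPolynomial.eval (fun k => ‖phi w k‖ ^ 2) p < 1) :
    ‖MvPolynomial.aeval (uVec z w) p‖ < 1 := by
  have : ‖MvPolynomial.aeval (uVec z w) p‖ ≤
      (MvPolynomial.eval (fun k => ‖phi z k‖ ^ 2) p +
        MvPolynomial.eval (fun k => ‖phi w k‖ ^ 2) p) / 2 := by
    simp only [MvPolynomial.aeval_def, MvPolynomial.eval₂_eq', MvPolynomial.eval_eq']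
    rw [← Finset.sum_add_distrib, Finset.sum_div]
    refine (norm_sum_le _ _).trans (Finset.sum_le_sum fun d _ => ?_)
    have e : ∀ v : Fin n → ℂ, ∏ k, (‖phi v k‖ ^ 2) ^ d k = (∏ k, ‖phi v k‖ ^ d k) ^ 2 := by
      intro v
      rw [← Finset.prod_pow]
      exact Finset.prod_congr rfl fun k _ => by ring
    rw [e, e, norm_mul, norm_prod]
    simp only [norm_pow, uVec, norm_mul, RCLike.norm_conj, mul_pow, Finset.prod_mul_distrib,
      Complex.coe_algebraMap, Complex.norm_real, Real.norm_of_nonneg (hp d)]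
    nlinarith [mul_nonneg (hp d) (sq_nonneg (∏ k, ‖phi z k‖ ^ d k - ∏ k, ‖phi w k‖ ^ d k))]
  linarith

/-- (a) for `z, w ∈ Δⁿ_P`, `P_j^ℂ(u(z,w)) ≠ 1` for each `j`, so the kernel
`K(z,w)` is well defined; (b) `K` is positive semi-definite. -/
theorem stmt10 {n : ℕ} (hn : 2 ≤ n) (P : Fin n → MvPolynomial (Fin n) ℝ)
    (hcoeff : ∀ j d, 0 ≤ (P j).coeff d)
    (hconst : ∀ j, (P j).coeff 0 = 0)
    (hlin : ∀ j k : Fin n, k ≠ j → (P j).coeff (Finsupp.single k 1) = 0)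
    (hdiag : ∀ j : Fin n, 0 < (P j).coeff (Finsupp.single j 1))
    (m : Fin n → ℕ) (hm : ∀ j, 1 ≤ m j) :
    (∀ z ∈ HartogsTriangle P, ∀ w ∈ HartogsTriangle P, ∀ j : Fin n,
      MvPolynomial.aeval (uVec z w) (P j) ≠ 1) ∧
    (∀ N : ℕ, 1 ≤ N → ∀ (zs : Fin N → (Fin n → ℂ)) (c : Fin N → ℂ),
      (∀ i, zs i ∈ HartogsTriangle P) →
      0 ≤ ∑ i : Fin N, ∑ l : Fin N,
        c i * (starRingEnd ℂ) (c l) * kerPm P m (zs i) (zs l)) := by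
  have hlt : ∀ z ∈ HartogsTriangle P, ∀ w ∈ HartogsTriangle P, ∀ j : Fin n,
      ‖MvPolynomial.aeval (uVec z w) (P j)‖ < 1 := fun z hz w hw j =>
    norm_aeval_lt z w (P j) (hcoeff j) (hz.2 j) (hw.2 j)
  refine ⟨fun z hz w hw j h => ?_, fun N _ zs c hzs => PK.form ?_ c⟩
  · have := hlt z hz w hw j
    rw [h] at this
    simp at this
  · unfold kerPm
    refine PK.mul ?_ (PK.prod _ fun j => ?_)
    · have := PK.rank1 (fun i => (∏ j ∈ Finset.univ.filter (fun j : Fin n => 1 ≤ (j : ℕ)),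
        zs i j)⁻¹)
      simpa only [map_inv₀, map_prod, ← mul_inv, ← Finset.prod_mul_distrib] using this
    · simp only [← inv_pow]
      exact ((PK.aeval zs (P j) (hcoeff j)).inv_one_sub
        fun i l => hlt _ (hzs i) _ (hzs l) j).pow _
end

section
/- For every n ≥ 1, every m = (m₁,…,mₙ) ∈ ℕⁿ with each m_j ≥ 1, and every α ∈ ℕⁿ, there exists a finite nonnegative Borel measure μ on [0,1]ⁿ such that for every β ∈ ℕⁿ: ∫_{[0,1]ⁿ} ∏_{j=1}^n t_j^{β_j} dμ(t) = ∏_{j=1}^n ( C(α_j + β₁ + ⋯ + β_j + m_j − 1, m_j − 1) )^{−1}, where C(a,b) denotes the binomial coefficient 'a choose b'. That is, the multisequence β ↦ ∏_{j=1}^n C(α_j + Σ_{l=1}^j β_l + m_j − 1, m_j − 1)^{−1} is a Hausdorff moment multisequence. -/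
open MeasureTheory

lemma aux_beta (p : ℕ) : ∀ N : ℕ, ∫ x in (0:ℝ)..1, x ^ N * (1 - x) ^ p =
    (N.factorial * p.factorial : ℝ) / ((N + p + 1).factorial : ℝ) := by
  induction p with
  | zero =>
    intro N
    have h : ((N.factorial : ℕ) : ℝ) ≠ 0 := by exact_mod_cast N.factorial_ne_zero
    have h2 : (N : ℝ) + 1 ≠ 0 := by positivity
    simp [integral_pow, Nat.factorial_succ]
    field_simp
  | succ p ih =>
    intro N
    have e : ∀ x : ℝ, x ^ N * (1 - x) ^ (p + 1) =
        x ^ N * (1 - x) ^ p - x ^ (N + 1) * (1 - x) ^ p := by intro x; ring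
    simp_rw [e]
    rw [intervalIntegral.integral_sub
      (Continuous.intervalIntegrable (by fun_prop) _ _)
      (Continuous.intervalIntegrable (by fun_prop) _ _), ih, ih]
    have h : (((N + p + 1).factorial : ℕ) : ℝ) ≠ 0 := by exact_mod_cast Nat.factorial_ne_zero _
    have h2 : (N : ℝ) + p + 1 + 1 ≠ 0 := by positivity
    rw [show N + 1 + p + 1 = (N + p + 1) + 1 by ring, show N + (p + 1) + 1 = (N + p + 1) + 1 by ring,
      Nat.factorial_succ (N + p + 1), Nat.factorial_succ N, Nat.factorial_succ p]
    push_cast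
    field_simp
    ring

lemma aux_one (a m : ℕ) (hm : 1 ≤ m) : ∃ ν : Measure ℝ, IsFiniteMeasure ν ∧
    (∀ᵐ x ∂ν, x ∈ Set.Icc (0:ℝ) 1) ∧
    ∀ k : ℕ, ∫ x, x ^ k ∂ν = ((Nat.choose (a + k + m - 1) (m - 1) : ℝ))⁻¹ := by
  obtain rfl | ⟨p, rfl⟩ : m = 1 ∨ ∃ p, m = p + 2 := by
    rcases m with _ | _ | p
    · omega
    · simp
    · exact Or.inr ⟨p, rfl⟩
  · refine ⟨Measure.dirac 1, inferInstance, ?_, ?_⟩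
    · exact (ae_dirac_iff (p := fun x => x ∈ Set.Icc (0:ℝ) 1) measurableSet_Icc).2 (by simp)
    · intro k; simp
  · let g : ℝ → ℝ := fun t => (p + 1) * (t ^ a * (1 - t) ^ p)
    have hg : Continuous g := by fun_prop
    have hf : Measurable (fun t => (g t).toNNReal) := hg.measurable.real_toNNReal
    refine ⟨(volume.restrict (Set.Ioc (0:ℝ) 1)).withDensity
      (fun t => ((g t).toNNReal : ENNReal)), ?_, ?_, ?_⟩
    · apply isFiniteMeasure_withDensity_ofReal
      exact ((hg.integrableOn_Icc (a := 0) (b := 1)).mono_set Set.Ioc_subset_Icc_self).2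
    · apply (withDensity_absolutelyContinuous _ _).ae_le
      filter_upwards [ae_restrict_mem measurableSet_Ioc] with x hx
      exact Set.Ioc_subset_Icc_self hx
    · intro k
      rw [integral_withDensity_eq_integral_smul hf]
      have : ∫ x in Set.Ioc (0:ℝ) 1, (g x).toNNReal • x ^ k =
          ∫ x in Set.Ioc (0:ℝ) 1, ((p : ℝ) + 1) * (x ^ (a + k) * (1 - x) ^ p) := by
        apply setIntegral_congr_fun measurableSet_Ioc
        intro x hx
        have h0 : 0 ≤ g x := by
          have h1 := hx.1.le
          have h2 := sub_nonneg.2 hx.2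
          simp only [g]; positivity
        simp only [NNReal.smul_def, Real.coe_toNNReal _ h0, smul_eq_mul, g]
        ring
      rw [this, ← intervalIntegral.integral_of_le zero_le_one,
        intervalIntegral.integral_const_mul, aux_beta]
      rw [show a + k + (p + 2) - 1 = (a + k) + (p + 1) by omega, show p + 2 - 1 = p + 1 by omega,
        ← Nat.choose_symm_add, Nat.cast_add_choose, Nat.factorial_succ p, inv_div, ← add_assoc]
      push_cast
      ring

/-- the multisequence
`β ↦ ∏_j C(α_j + β₁+⋯+β_j + m_j − 1, m_j − 1)⁻¹` is a Hausdorff moment multisequence: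
there is a finite nonnegative Borel measure on `[0,1]ⁿ` with these moments. -/
theorem stmt17 {n : ℕ} (hn : 1 ≤ n) (m : Fin n → ℕ) (hm : ∀ j, 1 ≤ m j)
    (α : Fin n → ℕ) :
    ∃ μ : Measure (Fin n → ℝ), IsFiniteMeasure μ ∧
      μ (Set.univ.pi fun _ : Fin n => Set.Icc (0 : ℝ) 1)ᶜ = 0 ∧
      ∀ β : Fin n → ℕ,
        (∫ t : Fin n → ℝ, ∏ j, (t j) ^ (β j) ∂μ) =
          ∏ j, ((Nat.choose (α j + (∑ l ∈ Finset.Iic j, β l) + m j - 1)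
            (m j - 1) : ℝ))⁻¹ := by
  choose ν hν hs hk using fun j => aux_one (α j) (m j) (hm j)
  let T : (Fin n → ℝ) → (Fin n → ℝ) := fun s j => ∏ i ∈ Finset.Ici j, s i
  have hT : Continuous T := by fun_prop
  refine ⟨(Measure.pi ν).map T, inferInstance, ?_, ?_⟩
  · have hms : MeasurableSet (Set.univ.pi fun _ : Fin n => Set.Icc (0 : ℝ) 1) :=
      MeasurableSet.univ_pi fun _ => measurableSet_Icc
    rw [Measure.map_apply hT.measurable hms.compl]
    have h : ∀ᵐ s ∂Measure.pi ν, ∀ i, s i ∈ Set.Icc (0:ℝ) 1 :=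
      Filter.eventually_all.2 fun i => Measure.tendsto_eval_ae_ae.eventually (hs i)
    have h' : ∀ᵐ s ∂Measure.pi ν, T s ∈ (Set.univ.pi fun _ : Fin n => Set.Icc (0 : ℝ) 1) := by
      filter_upwards [h] with s hs j _
      exact ⟨Finset.prod_nonneg fun i _ => (hs i).1,
        Finset.prod_le_one (fun i _ => (hs i).1) fun i _ => (hs i).2⟩
    exact h'
  · intro β
    rw [integral_map hT.measurable.aemeasurable
      (Continuous.aestronglyMeasurable (by fun_prop))]
    have e : ∀ s : Fin n → ℝ, ∏ j, (T s j) ^ (β j) =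
        ∏ i, (s i) ^ (∑ l ∈ Finset.Iic i, β l) := by
      intro s
      simp only [T, ← Finset.prod_pow, ← Finset.prod_pow_eq_pow_sum]
      exact Finset.prod_comm' (by simp)
    simp_rw [e]
    rw [integral_fintype_prod_eq_prod (fun i (x : ℝ) => x ^ (∑ l ∈ Finset.Iic i, β l))]
    simp_rw [hk]
end

section
/- Let n ≥ 2 and let r₁,…,rₙ be positive real numbers. Let Δ = {z ∈ ℂⁿ : z_j ≠ 0 for j = 2,…,n, |z_j| < r_j·|z_{j+1}| for j = 1,…,n−1, and |zₙ| < rₙ}, and let ψ : ℂⁿ → ℂⁿ be the polynomial map ψ(w) = (w₁w₂⋯wₙ, w₂⋯wₙ, …, w_{n−1}wₙ, wₙ). Then the closure of Δ in ℂⁿ equals the image under ψ of the closed polydisc ∏_{j=1}^n {w ∈ ℂ : |w| ≤ r_j}. -/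
lemma aux_step {n : ℕ} (w : Fin n → ℂ) (j : Fin n) (h : (j : ℕ) + 1 < n) :
    ∏ k ∈ Finset.Ici j, w k = w j * ∏ k ∈ Finset.Ici (⟨(j : ℕ) + 1, h⟩ : Fin n), w k := by
  have : Finset.Ici j = insert j (Finset.Ici (⟨(j : ℕ) + 1, h⟩ : Fin n)) := by
    ext k
    simp only [Finset.mem_Ici, Finset.mem_insert, Fin.le_def, Fin.ext_iff]
    omega
  rw [this, Finset.prod_insert]
  simp [Fin.le_def]

lemma aux_last {n : ℕ} (w : Fin n → ℂ) (j : Fin n) (h : ¬ (j : ℕ) + 1 < n) :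
    ∏ k ∈ Finset.Ici j, w k = w j := by
  have : Finset.Ici j = {j} := by
    ext k
    simp only [Finset.mem_Ici, Finset.mem_singleton, Fin.le_def, Fin.ext_iff]
    omega
  rw [this, Finset.prod_singleton]

lemma aux_closure (r : ℝ) (hr : 0 < r) (x : ℂ) (hx : ‖x‖ ≤ r) :
    x ∈ closure (Metric.ball (0 : ℂ) r ∩ {0}ᶜ) := by
  have h1 : Metric.ball (0 : ℂ) r ⊆ closure (Metric.ball (0 : ℂ) r ∩ {0}ᶜ) :=
    (dense_compl_singleton (0 : ℂ)).open_subset_closure_inter Metric.isOpen_ball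
  have h2 := closure_minimal h1 isClosed_closure
  rw [closure_ball _ hr.ne'] at h2
  exact h2 (by simpa using hx)

/-- for positive radii `r₁,…,rₙ`, the closure of the generalized Hartogs
triangle `Δ = {z : z_j ≠ 0 (j ≥ 2), |z_j| < r_j|z_{j+1}|, |zₙ| < rₙ}` equals the image of
the closed polydisc of polyradius `(r₁,…,rₙ)` under the polynomial map
`ψ(w) = (w₁⋯wₙ, w₂⋯wₙ, …, wₙ)`. -/
theorem stmt19 {n : ℕ} (hn : 2 ≤ n) (r : Fin n → ℝ) (hr : ∀ j, 0 < r j) :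
    closure {z : Fin n → ℂ |
        (∀ j : Fin n, 1 ≤ (j : ℕ) → z j ≠ 0) ∧
        (∀ (j : Fin n) (h : (j : ℕ) + 1 < n), ‖z j‖ < r j * ‖z ⟨(j : ℕ) + 1, h⟩‖) ∧
        ‖z ⟨n - 1, by omega⟩‖ < r ⟨n - 1, by omega⟩} =
      (fun w : Fin n → ℂ => fun j : Fin n => ∏ k ∈ Finset.Ici j, w k) ''
        {w : Fin n → ℂ | ∀ j, ‖w j‖ ≤ r j} := by
  apply subset_antisymm
  · apply closure_minimal
    · rintro z ⟨h0, h1, h2⟩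
      refine ⟨fun j => if h : (j : ℕ) + 1 < n then z j / z ⟨(j : ℕ) + 1, h⟩ else z j, ?_, ?_⟩
      · intro j
        by_cases h : (j : ℕ) + 1 < n
        · have hz := norm_pos_iff.mpr (h0 ⟨(j : ℕ) + 1, h⟩ (by simp))
          simp only [h, dite_true, norm_div]
          rw [div_le_iff₀ hz]
          exact (h1 j h).le
        · have : j = ⟨n - 1, by omega⟩ := Fin.ext (by have := j.2; simp only; omega)
          simp only [h, dite_false]
          rw [this]
          exact h2.le
      · have key : ∀ m : ℕ, ∀ j : Fin n, (j : ℕ) + m + 1 = n →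
            ∏ k ∈ Finset.Ici j, (if h : (k : ℕ) + 1 < n then z k / z ⟨(k : ℕ) + 1, h⟩ else z k)
              = z j := by
          intro m
          induction m with
          | zero =>
            intro j hj
            have h : ¬ (j : ℕ) + 1 < n := by omega
            rw [aux_last _ _ h, dif_neg h]
          | succ m ih =>
            intro j hj
            have h : (j : ℕ) + 1 < n := by omega
            rw [aux_step _ _ h, dif_pos h, ih _ (by simp only; omega)]
            exact div_mul_cancel₀ _ (h0 _ (by simp))
        funext j
        exact key (n - 1 - j) j (by omega)
    · apply IsCompact.isClosed
      apply IsCompact.image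
      · have : {w : Fin n → ℂ | ∀ j, ‖w j‖ ≤ r j}
            = Set.pi Set.univ (fun j => Metric.closedBall (0 : ℂ) (r j)) := by
          ext w; simp
        rw [this]
        exact isCompact_univ_pi fun j => isCompact_closedBall _ _
      · fun_prop
  · have hsub : {w : Fin n → ℂ | ∀ j, ‖w j‖ ≤ r j} ⊆
        closure (Set.pi Set.univ (fun j => Metric.ball (0 : ℂ) (r j) ∩ {0}ᶜ)) := by
      intro w hw
      rw [closure_pi_set]
      intro j _
      exact aux_closure _ (hr j) _ (hw j)
    refine (Set.image_mono hsub).trans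
      ((image_closure_subset_closure_image (by fun_prop)).trans (closure_mono ?_))
    rintro _ ⟨w, hw, rfl⟩
    have hw1 : ∀ j, ‖w j‖ < r j := fun j => by simpa using (hw j trivial).1
    have hw2 : ∀ j, w j ≠ 0 := fun j => by simpa using (hw j trivial).2
    have hp : ∀ j, ∏ k ∈ Finset.Ici j, w k ≠ 0 := fun j =>
      Finset.prod_ne_zero_iff.mpr fun k _ => hw2 k
    refine ⟨fun j _ => hp j, fun j h => ?_, ?_⟩
    · simp only
      rw [aux_step w j h, norm_mul]
      exact mul_lt_mul_of_pos_right (hw1 j) (norm_pos_iff.mpr (hp _))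
    · simp only
      rw [aux_last w _ (by simp only; omega)]
      exact hw1 _
end
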